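/- arXiv:2110.03911 — 2 statements merged into one kernel-verified Lean document; each statement's English description precedes it below -/
import Mathlib

section
/- The function g(τ) = C·(ψ(τ)−ψ(a))^β·(ψ(b)−ψ(τ))^{α+β−1} is nonnegative on [a,b], and for all t, τ with a ≤ t ≤ τ ≤ b one has 0 ≤ g₂(τ,t) ≤ g(τ); moreover g attains its maximum over [a,b] at the unique point τ₀ ∈ (a,b) satisfying ψ(τ₀) = (β·ψ(b) + (α+β−1)·ψ(a))/(α+2β−1), with maximum value C·β^β·(α+β−1)^{α+β−1}·L^{α+2β−1}/(α+2β−1)^{α+2β−1}. -/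
open MeasureTheory Set

/-- The function `g₂(τ,t) = C·(ψ(t)−ψ(a))^β·(ψ(b)−ψ(τ))^{α+β−1}`,
with `C = 1/(Γ(α+β)·(ψ(b)−ψ(a))^β)`. -/
noncomputable def g₂ (a b α β : ℝ) (ψ : ℝ → ℝ) (τ t : ℝ) : ℝ :=
  (ψ t - ψ a) ^ β * (ψ b - ψ τ) ^ (α + β - 1) /
    (Real.Gamma (α + β) * (ψ b - ψ a) ^ β)

/-- The majorant `g(τ) = C·(ψ(τ)−ψ(a))^β·(ψ(b)−ψ(τ))^{α+β−1}`. -/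
noncomputable def gMaj (a b α β : ℝ) (ψ : ℝ → ℝ) (τ : ℝ) : ℝ :=
  (ψ τ - ψ a) ^ β * (ψ b - ψ τ) ^ (α + β - 1) /
    (Real.Gamma (α + β) * (ψ b - ψ a) ^ β)

theorem aux_amgm (p q x y : ℝ) (hp : 0 < p) (hq : 0 < q) (hx : 0 ≤ x) (hy : 0 ≤ y) :
    x ^ p * y ^ q ≤ p ^ p * q ^ q * ((x + y) / (p + q)) ^ (p + q) := by
  have hs : 0 < p + q := by linarith
  have hxp : 0 ≤ x / p := by positivity
  have hyq : 0 ≤ y / q := by positivity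
  have h := Real.geom_mean_le_arith_mean2_weighted (w₁ := p / (p + q)) (w₂ := q / (p + q))
    (by positivity) (by positivity) hxp hyq (by field_simp)
  have e : p / (p + q) * (x / p) + q / (p + q) * (y / q) = (x + y) / (p + q) := by
    field_simp
  rw [e] at h
  have h2 := Real.rpow_le_rpow (by positivity) h hs.le
  rw [Real.mul_rpow (by positivity) (by positivity), ← Real.rpow_mul hxp, ← Real.rpow_mul hyq,
    div_mul_cancel₀ _ hs.ne', div_mul_cancel₀ _ hs.ne', Real.div_rpow hx hp.le,
    Real.div_rpow hy hq.le] at h2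
  have hpp : 0 < p ^ p := Real.rpow_pos_of_pos hp _
  have hqq : 0 < q ^ q := Real.rpow_pos_of_pos hq _
  calc x ^ p * y ^ q = p ^ p * q ^ q * (x ^ p / p ^ p * (y ^ q / q ^ q)) := by field_simp
    _ ≤ _ := by gcongr

theorem gMaj_bounds_and_max
    (a b α β : ℝ) (hab : a < b)
    (hα0 : 0 < α) (hα1 : α ≤ 1) (hβ0 : 0 < β) (hβ1 : β ≤ 1) (hαβ : 1 < α + β)
    (ψ ψd : ℝ → ℝ)
    (hψ : ∀ t ∈ Set.Icc a b, HasDerivAt ψ (ψd t) t)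
    (hψd_cont : ContinuousOn ψd (Set.Icc a b))
    (hψd_pos : ∀ t ∈ Set.Icc a b, 0 < ψd t) :
    (∀ τ ∈ Set.Icc a b, 0 ≤ gMaj a b α β ψ τ) ∧
    (∀ t τ, a ≤ t → t ≤ τ → τ ≤ b →
      0 ≤ g₂ a b α β ψ τ t ∧ g₂ a b α β ψ τ t ≤ gMaj a b α β ψ τ) ∧
    ∃ τ₀ ∈ Set.Ioo a b,
      ψ τ₀ = (β * ψ b + (α + β - 1) * ψ a) / (α + 2 * β - 1) ∧
      (∀ τ' ∈ Set.Ioo a b,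
        ψ τ' = (β * ψ b + (α + β - 1) * ψ a) / (α + 2 * β - 1) → τ' = τ₀) ∧
      gMaj a b α β ψ τ₀ =
        (1 / (Real.Gamma (α + β) * (ψ b - ψ a) ^ β)) * β ^ β *
          (α + β - 1) ^ (α + β - 1) * (ψ b - ψ a) ^ (α + 2 * β - 1) /
          (α + 2 * β - 1) ^ (α + 2 * β - 1) ∧
      ∀ τ ∈ Set.Icc a b, gMaj a b α β ψ τ ≤ gMaj a b α β ψ τ₀ := by
  have hmono : StrictMonoOn ψ (Icc a b) := by
    apply strictMonoOn_of_deriv_pos (convex_Icc a b)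
    · exact fun t ht => (hψ t ht).continuousAt.continuousWithinAt
    · intro t ht
      have ht' := interior_subset ht
      rw [(hψ t ht').deriv]
      exact hψd_pos t ht'
  have ha : a ∈ Icc a b := ⟨le_rfl, hab.le⟩
  have hb : b ∈ Icc a b := ⟨hab.le, le_rfl⟩
  have hL : 0 < ψ b - ψ a := sub_pos.2 (hmono ha hb hab)
  have hq : 0 < α + β - 1 := by linarith
  have hs : 0 < α + 2 * β - 1 := by linarith
  have hD : 0 < Real.Gamma (α + β) * (ψ b - ψ a) ^ β :=
    mul_pos (Real.Gamma_pos_of_pos (by linarith)) (Real.rpow_pos_of_pos hL _)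
  have hlo : ∀ t ∈ Icc a b, 0 ≤ ψ t - ψ a := fun t ht =>
    sub_nonneg.2 (hmono.monotoneOn ha ht ht.1)
  have hhi : ∀ t ∈ Icc a b, 0 ≤ ψ b - ψ t := fun t ht =>
    sub_nonneg.2 (hmono.monotoneOn ht hb ht.2)
  refine ⟨?_, ?_, ?_⟩
  · intro τ hτ
    exact div_nonneg (mul_nonneg (Real.rpow_nonneg (hlo τ hτ) _)
      (Real.rpow_nonneg (hhi τ hτ) _)) hD.le
  · intro t τ h1 h2 h3
    have ht : t ∈ Icc a b := ⟨h1, h2.trans h3⟩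
    have hτ : τ ∈ Icc a b := ⟨h1.trans h2, h3⟩
    refine ⟨div_nonneg (mul_nonneg (Real.rpow_nonneg (hlo t ht) _)
      (Real.rpow_nonneg (hhi τ hτ) _)) hD.le, ?_⟩
    unfold g₂ gMaj
    refine div_le_div_of_nonneg_right (mul_le_mul_of_nonneg_right ?_
      (Real.rpow_nonneg (hhi τ hτ) _)) hD.le
    exact Real.rpow_le_rpow (hlo t ht) (sub_le_sub_right (hmono.monotoneOn ht hτ h2) _) hβ0.le
  · have hcont : ContinuousOn ψ (Icc a b) :=
      fun t ht => (hψ t ht).continuousAt.continuousWithinAt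
    have hmem : (β * ψ b + (α + β - 1) * ψ a) / (α + 2 * β - 1) ∈ Ioo (ψ a) (ψ b) := by
      constructor
      · rw [lt_div_iff₀ hs]
        nlinarith [mul_pos hβ0 hL]
      · rw [div_lt_iff₀ hs]
        nlinarith [mul_pos hq hL]
    obtain ⟨τ₀, hτ₀, hv⟩ := intermediate_value_Ioo hab.le hcont hmem
    have hval : gMaj a b α β ψ τ₀ =
        (1 / (Real.Gamma (α + β) * (ψ b - ψ a) ^ β)) * β ^ β *
          (α + β - 1) ^ (α + β - 1) * (ψ b - ψ a) ^ (α + 2 * β - 1) /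
          (α + 2 * β - 1) ^ (α + 2 * β - 1) := by
      have e1 : ψ τ₀ - ψ a = β * ((ψ b - ψ a) / (α + 2 * β - 1)) := by
        have hne := hs.ne'
        rw [hv, ← mul_div_assoc, eq_div_iff hne, sub_mul, div_mul_cancel₀ _ hne]; ring
      have e2 : ψ b - ψ τ₀ = (α + β - 1) * ((ψ b - ψ a) / (α + 2 * β - 1)) := by
        have hne := hs.ne'
        rw [hv, ← mul_div_assoc, eq_div_iff hne, sub_mul, div_mul_cancel₀ _ hne]; ring
      have hr : 0 < (ψ b - ψ a) / (α + 2 * β - 1) := by positivity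
      unfold gMaj
      rw [e1, e2, Real.mul_rpow hβ0.le hr.le, Real.mul_rpow hq.le hr.le]
      have e3 : ((ψ b - ψ a) / (α + 2 * β - 1)) ^ β *
          ((ψ b - ψ a) / (α + 2 * β - 1)) ^ (α + β - 1) =
          (ψ b - ψ a) ^ (α + 2 * β - 1) / (α + 2 * β - 1) ^ (α + 2 * β - 1) := by
        rw [← Real.rpow_add hr, ← Real.div_rpow hL.le hs.le]
        congr 1; ring
      rw [mul_mul_mul_comm, e3]
      ring
    refine ⟨τ₀, hτ₀, hv, ?_, hval, ?_⟩
    · intro τ' hτ' h'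
      exact hmono.injOn (Ioo_subset_Icc_self hτ') (Ioo_subset_Icc_self hτ₀) (h'.trans hv.symm)
    · intro τ hτ
      rw [hval]
      have h := aux_amgm β (α + β - 1) _ _ hβ0 hq (hlo τ hτ) (hhi τ hτ)
      rw [show ψ τ - ψ a + (ψ b - ψ τ) = ψ b - ψ a by ring,
        show β + (α + β - 1) = α + 2 * β - 1 by ring, Real.div_rpow hL.le hs.le] at h
      unfold gMaj
      refine (div_le_div_of_nonneg_right h hD.le).trans (le_of_eq ?_)
      ring
end

section
/- (Lower bound for eigenvalues) Suppose κ ∈ (0,1) and |𝒢(x)| ≤ κ·‖x‖ for all x ∈ C([a,b],ℝ). If λ ∈ ℝ is such that there exists a nontrivial continuous function x: [a,b] → ℝ satisfying x(t) = ((ψ(t)−ψ(a))/L)^β·𝒢(x) − λ·∫_a^b G(τ,t)·ψ'(τ)·x(τ) dτ for all t ∈ [a,b] (the mild-solution formulation of the eigenvalue problem (ᶜD^{α,ψ}ᶜD^{β,ψ}x)(t) = λ·x(t), x(a) = 0, x(b) = 𝒢(x)), then |λ| ≥ (1−κ)/(G_max·L), where G_max = L^{α+β−1}/Γ(α+β).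 -/
open MeasureTheory Set

/-- The Green function of the sequential fractional boundary value problem. -/
noncomputable def G (a b α β : ℝ) (ψ : ℝ → ℝ) (τ t : ℝ) : ℝ :=
  if τ ≤ t then
    (ψ t - ψ a) ^ β * (ψ b - ψ τ) ^ (α + β - 1) /
        (Real.Gamma (α + β) * (ψ b - ψ a) ^ β) -
      (ψ t - ψ τ) ^ (α + β - 1) / Real.Gamma (α + β)
  else
    (ψ t - ψ a) ^ β * (ψ b - ψ τ) ^ (α + β - 1) /
      (Real.Gamma (α + β) * (ψ b - ψ a) ^ β)

/-- The supremum norm of a function over the interval `[a,b]`. -/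
noncomputable def supNorm (a b : ℝ) (x : ℝ → ℝ) : ℝ :=
  ⨆ t : Set.Icc a b, |x ↑t|

theorem G_abs_le (a b α β : ℝ) (ψ : ℝ → ℝ) (hβ0 : 0 < β) (hαβ : 1 < α + β)
    (hmono : MonotoneOn ψ (Icc a b)) (hL : 0 < ψ b - ψ a) (hab : a ≤ b)
    (τ t : ℝ) (hτ : τ ∈ Icc a b) (ht : t ∈ Icc a b) :
    |G a b α β ψ τ t| ≤ (ψ b - ψ a) ^ (α + β - 1) / Real.Gamma (α + β) := by
  have hΓ : 0 < Real.Gamma (α + β) := Real.Gamma_pos_of_pos (by linarith)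
  have ha : a ∈ Icc a b := left_mem_Icc.2 hab
  have hb : b ∈ Icc a b := right_mem_Icc.2 hab
  have h1 : ψ a ≤ ψ t := hmono ha ht ht.1
  have h2 : ψ t ≤ ψ b := hmono ht hb ht.2
  have h3 : ψ a ≤ ψ τ := hmono ha hτ hτ.1
  have h4 : ψ τ ≤ ψ b := hmono hτ hb hτ.2
  have hLβ : 0 < (ψ b - ψ a) ^ β := Real.rpow_pos_of_pos hL _
  have e1 : (ψ t - ψ a) ^ β ≤ (ψ b - ψ a) ^ β :=
    Real.rpow_le_rpow (by linarith) (by linarith) hβ0.le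
  have e1' : 0 ≤ (ψ t - ψ a) ^ β := Real.rpow_nonneg (by linarith) _
  have e2 : (ψ b - ψ τ) ^ (α + β - 1) ≤ (ψ b - ψ a) ^ (α + β - 1) :=
    Real.rpow_le_rpow (by linarith) (by linarith) (by linarith)
  have e2' : 0 ≤ (ψ b - ψ τ) ^ (α + β - 1) := Real.rpow_nonneg (by linarith) _
  have hu0 : 0 ≤ (ψ t - ψ a) ^ β * (ψ b - ψ τ) ^ (α + β - 1) /
        (Real.Gamma (α + β) * (ψ b - ψ a) ^ β) := by positivity
  have hu1 : (ψ t - ψ a) ^ β * (ψ b - ψ τ) ^ (α + β - 1) /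
        (Real.Gamma (α + β) * (ψ b - ψ a) ^ β)
        ≤ (ψ b - ψ a) ^ (α + β - 1) / Real.Gamma (α + β) := by
    rw [div_le_div_iff₀ (by positivity) hΓ]
    have := mul_le_mul e1 e2 e2' hLβ.le
    nlinarith
  unfold G
  split_ifs with h
  · have h5 : ψ τ ≤ ψ t := hmono hτ ht h
    have hv0 : 0 ≤ (ψ t - ψ τ) ^ (α + β - 1) / Real.Gamma (α + β) :=
      div_nonneg (Real.rpow_nonneg (by linarith) _) hΓ.le
    have hv1 : (ψ t - ψ τ) ^ (α + β - 1) / Real.Gamma (α + β)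
        ≤ (ψ b - ψ a) ^ (α + β - 1) / Real.Gamma (α + β) :=
      div_le_div_of_nonneg_right
        (Real.rpow_le_rpow (by linarith) (by linarith) (by linarith)) hΓ.le
    rw [abs_le]; constructor <;> linarith
  · rw [abs_of_nonneg hu0]; exact hu1

theorem eigenvalue_lower_bound
    (a b α β κ lam : ℝ) (hab : a < b)
    (hα0 : 0 < α) (hα1 : α ≤ 1) (hβ0 : 0 < β) (hβ1 : β ≤ 1) (hαβ : 1 < α + β)
    (ψ ψd : ℝ → ℝ)
    (hψ : ∀ t ∈ Set.Icc a b, HasDerivAt ψ (ψd t) t)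
    (hψd_cont : ContinuousOn ψd (Set.Icc a b))
    (hψd_pos : ∀ t ∈ Set.Icc a b, 0 < ψd t)
    (𝒢 : (ℝ → ℝ) → ℝ)
    (hκ0 : 0 < κ) (hκ1 : κ < 1)
    (h𝒢 : ∀ x : ℝ → ℝ, ContinuousOn x (Set.Icc a b) → |𝒢 x| ≤ κ * supNorm a b x)
    (x : ℝ → ℝ) (hx_cont : ContinuousOn x (Set.Icc a b))
    (hx_nontrivial : ∃ t ∈ Set.Icc a b, x t ≠ 0)
    (hmild : ∀ t ∈ Set.Icc a b,
      x t = ((ψ t - ψ a) / (ψ b - ψ a)) ^ β * 𝒢 x -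
        lam * ∫ τ in a..b, G a b α β ψ τ t * ψd τ * x τ) :
    |lam| ≥ (1 - κ) /
      ((ψ b - ψ a) ^ (α + β - 1) / Real.Gamma (α + β) * (ψ b - ψ a)) := by
  have hΓ : 0 < Real.Gamma (α + β) := Real.Gamma_pos_of_pos (by linarith)
  have hsm : StrictMonoOn ψ (Icc a b) := by
    apply strictMonoOn_of_deriv_pos (convex_Icc a b)
    · exact fun t ht => (hψ t ht).continuousAt.continuousWithinAt
    · intro t ht
      have ht' := interior_subset ht
      rw [(hψ t ht').deriv]
      exact hψd_pos t ht'
  have hL : 0 < ψ b - ψ a :=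
    sub_pos.2 (hsm (left_mem_Icc.2 hab.le) (right_mem_Icc.2 hab.le) hab)
  obtain ⟨t, ht, hmax⟩ := isCompact_Icc.exists_isMaxOn (nonempty_Icc.2 hab.le) hx_cont.abs
  have hmax' : ∀ s ∈ Icc a b, |x s| ≤ |x t| := fun s hs => hmax hs
  have hN : 0 < |x t| := by
    obtain ⟨s, hs, hne⟩ := hx_nontrivial
    exact (abs_pos.2 hne).trans_le (hmax' s hs)
  have hsup : supNorm a b x ≤ |x t| := by
    have : Nonempty (Icc a b) := ⟨⟨t, ht⟩⟩
    exact ciSup_le fun s => hmax' s s.2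
  have hG := G_abs_le a b α β ψ hβ0 hαβ hsm.monotoneOn hL hab.le
  set M := (ψ b - ψ a) ^ (α + β - 1) / Real.Gamma (α + β) with hM
  have hMpos : 0 < M := div_pos (Real.rpow_pos_of_pos hL _) hΓ
  have hii : IntervalIntegrable ψd volume a b := by
    apply ContinuousOn.intervalIntegrable
    rwa [uIcc_of_le hab.le]
  have hFTC : ∫ τ in a..b, ψd τ = ψ b - ψ a := by
    apply intervalIntegral.integral_eq_sub_of_hasDerivAt _ hii
    rwa [uIcc_of_le hab.le]
  have hI : |∫ τ in a..b, G a b α β ψ τ t * ψd τ * x τ| ≤ M * |x t| * (ψ b - ψ a) := by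
    rw [← hFTC, ← intervalIntegral.integral_const_mul, ← Real.norm_eq_abs]
    apply intervalIntegral.norm_integral_le_of_norm_le hab.le _ (hii.const_mul _)
    refine Filter.Eventually.of_forall fun τ hτ => ?_
    have hτ' : τ ∈ Icc a b := Ioc_subset_Icc_self hτ
    have hp := hψd_pos τ hτ'
    rw [Real.norm_eq_abs, abs_mul, abs_mul, abs_of_pos hp]
    calc |G a b α β ψ τ t| * ψd τ * |x τ| ≤ M * ψd τ * |x t| := by
          exact mul_le_mul (mul_le_mul_of_nonneg_right (hG τ t hτ' ht) hp.le)
            (hmax' τ hτ') (abs_nonneg _) (mul_pos hMpos hp).le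
      _ = M * |x t| * ψd τ := by ring
  have hq : |((ψ t - ψ a) / (ψ b - ψ a)) ^ β| ≤ 1 := by
    have h1 : ψ a ≤ ψ t := hsm.monotoneOn (left_mem_Icc.2 hab.le) ht ht.1
    have h2 : ψ t ≤ ψ b := hsm.monotoneOn ht (right_mem_Icc.2 hab.le) ht.2
    have h0 : 0 ≤ (ψ t - ψ a) / (ψ b - ψ a) := div_nonneg (by linarith) hL.le
    rw [abs_of_nonneg (Real.rpow_nonneg h0 _)]
    exact Real.rpow_le_one h0 ((div_le_one hL).2 (by linarith)) hβ0.le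
  have hGx : |𝒢 x| ≤ κ * |x t| :=
    (h𝒢 x hx_cont).trans (mul_le_mul_of_nonneg_left hsup hκ0.le)
  have key : |x t| ≤ κ * |x t| + |lam| * (M * |x t| * (ψ b - ψ a)) := by
    calc |x t| = _ := congrArg abs (hmild t ht)
      _ ≤ _ := abs_sub _ _
      _ ≤ 1 * (κ * |x t|) + |lam| * (M * |x t| * (ψ b - ψ a)) := by
          rw [abs_mul, abs_mul]
          gcongr
      _ = _ := by ring
  rw [ge_iff_le, div_le_iff₀ (mul_pos hMpos hL)]
  refine le_of_mul_le_mul_right ?_ hN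
  linarith
end
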